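/- arXiv:1808.03416 — 2 statements merged into one kernel-verified Lean document; each statement's English description precedes it below -/
import Mathlib

section
/- Every holomorphic homogeneous regular (HHR) bounded domain D in a complex Banach space V is complete with respect to the Carathéodory distance C_D, and hence is a domain of holomorphy. -/
open Metric Set

/-- The inverse hyperbolic tangent, `artanh t = ½ log((1+t)/(1−t))`. -/
noncomputable def artanh (t : ℝ) : ℝ := (1 / 2) * Real.log ((1 + t) / (1 - t))

/-- The Carathéodory distance of a domain `D` in a complex Banach space. -/
noncomputable def caraDist {V : Type*} [NormedAddCommGroup V] [NormedSpace ℂ V]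
    (D : Set V) (x y : V) : ℝ :=
  sSup {t : ℝ | ∃ f : V → ℂ, DifferentiableOn ℂ f D ∧ (∀ z ∈ D, ‖f z‖ < 1) ∧
    t = artanh ‖(f x - f y) / (1 - (starRingEnd ℂ) (f x) * f y)‖}

/-- The squeezing function of a bounded domain `D ⊆ V`, via holomorphic embeddings into the
open unit ball of the Hilbert space `H`. -/
noncomputable def squeezingFun (H : Type*) [NormedAddCommGroup H] [InnerProductSpace ℂ H]
    {V : Type*} [NormedAddCommGroup V] [NormedSpace ℂ V] (D : Set V) (p : V) : ℝ :=
  sSup {r : ℝ | 0 < r ∧ ∃ f : V → H, ∃ g : H → V,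
    DifferentiableOn ℂ f D ∧ IsOpen (f '' D) ∧ Set.InjOn f D ∧
    DifferentiableOn ℂ g (f '' D) ∧ (∀ z ∈ D, g (f z) = z) ∧
    f '' D ⊆ ball (0 : H) 1 ∧ f p = 0 ∧ ball (0 : H) r ⊆ f '' D}

/-- A domain of holomorphy in a complex Banach space. -/
def IsDomainOfHolomorphy {V : Type*} [NormedAddCommGroup V] [NormedSpace ℂ V]
    (D : Set V) : Prop :=
  ¬ ∃ U W : Set V, IsOpen U ∧ IsConnected U ∧ (D ∩ U).Nonempty ∧ ¬ U ⊆ D ∧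
    IsOpen W ∧ W.Nonempty ∧ W ⊆ D ∩ U ∧
    ∀ f : V → ℂ, DifferentiableOn ℂ f D →
      ∃ F : V → ℂ, DifferentiableOn ℂ F U ∧ Set.EqOn f F W

/-!
Every holomorphic `f : D → ball 0 1` into a normed space satisfies `‖f x - f y‖ ≤ 2 * C_D x y`, by
composing `f` with norming functionals. So an embedding of `D` with `f (x N) = 0` turns a
`C_D`-Cauchy sequence into a norm-Cauchy one, and when `x n` is `C_D`-close to `x N` for `n ≥ N`
the limit lies in a ball of fixed radius around `0`, which the squeezing function puts inside
`f '' D`; pull the limit back.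

If all holomorphic functions on `D` extended to a connected `U ⊈ D`, then each extension would take
no values besides those of the original function (otherwise `1 / (f - c)` could not extend), so
disc-valued functions would have disc-valued extensions and `C_D ≤ C_U` on a component of `D ∩ U`.
A sequence in that component tending to a point of `U \ D` is `C_U`-Cauchy, hence `C_D`-Cauchy, but
has no limit in `D`.
-/

open Filter Function
open scoped Topology ComplexConjugate

section PoincareDisc

lemma artanh_eq_real_artanh {t : ℝ} (ht : t ∈ Icc (-1) 1) : artanh t = Real.artanh t :=
  (Real.artanh_eq_half_log ht).symm

lemma artanh_zero : artanh 0 = 0 := by simp [artanh]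

lemma artanh_le_artanh {s t : ℝ} (hs : -1 < s) (ht : t < 1) (hst : s ≤ t) :
    artanh s ≤ artanh t := by
  rw [artanh_eq_real_artanh ⟨hs.le, hst.trans ht.le⟩,
    artanh_eq_real_artanh ⟨hs.le.trans hst, ht.le⟩]
  exact Real.artanh_le_artanh hs ht hst

lemma self_le_artanh {t : ℝ} (h0 : 0 ≤ t) (h1 : t < 1) : t ≤ artanh t := by
  have hpos : 0 < 1 - t := sub_pos.2 h1
  have hlog := Real.le_log_one_add_of_nonneg (x := 2 * t / (1 - t)) (by positivity)
  have hleft : 2 * (2 * t / (1 - t)) / (2 * t / (1 - t) + 2) = 2 * t := by field_simp; ring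
  have hright : 1 + 2 * t / (1 - t) = (1 + t) / (1 - t) := by field_simp; ring
  rw [hleft, hright] at hlog
  unfold artanh
  linarith

lemma artanh_add_artanh {s t : ℝ} (hs : s ∈ Ioo (-1) 1) (ht : t ∈ Ioo (-1) 1) :
    artanh s + artanh t = artanh ((s + t) / (1 + s * t)) := by
  obtain ⟨hs₁, hs₂⟩ := hs
  obtain ⟨ht₁, ht₂⟩ := ht
  have hs' : 0 < 1 + s := by linarith
  have hs'' : 0 < 1 - s := by linarith
  have ht' : 0 < 1 + t := by linarith
  have ht'' : 0 < 1 - t := by linarith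
  have hst : 0 < 1 + s * t := by nlinarith [mul_pos hs' ht', mul_pos hs'' ht'']
  have hratio : (1 + (s + t) / (1 + s * t)) / (1 - (s + t) / (1 + s * t)) =
      (1 + s) / (1 - s) * ((1 + t) / (1 - t)) := by
    have hnum : 1 + (s + t) / (1 + s * t) = (1 + s) * (1 + t) / (1 + s * t) := by
      field_simp; ring
    have hden : 1 - (s + t) / (1 + s * t) = (1 - s) * (1 - t) / (1 + s * t) := by
      field_simp; ring
    rw [hnum, hden, div_div_div_cancel_right₀ hst.ne', mul_div_mul_comm]
  rw [artanh, artanh, artanh, hratio, Real.log_mul (by positivity) (by positivity), mul_add]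

lemma continuousAt_artanh_zero : ContinuousAt artanh 0 := by
  unfold artanh
  exact continuousAt_const.mul <| ContinuousAt.log
    (ContinuousAt.div (by fun_prop) (by fun_prop) (by simp)) (by simp)

/-- The pseudohyperbolic distance on the unit disc of `ℂ`, written with the same formula as in
`caraDist`. -/
noncomputable def pseudoHyperbolicDist (a b : ℂ) : ℝ := ‖(a - b) / (1 - conj a * b)‖

/-- The Poincaré distance on the unit disc of `ℂ`, normalised by `d(0, z) = artanh ‖z‖`. -/
noncomputable def poincareDist (a b : ℂ) : ℝ := artanh (pseudoHyperbolicDist a b)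

variable {a b c : ℂ}

lemma norm_one_sub_conj_mul_comm (a b : ℂ) : ‖1 - conj a * b‖ = ‖1 - conj b * a‖ := by
  rw [← RCLike.norm_conj (1 - conj a * b)]
  simp [mul_comm]

lemma norm_one_sub_conj_mul_sq_sub (a b : ℂ) :
    ‖1 - conj a * b‖ ^ 2 - ‖a - b‖ ^ 2 = (1 - ‖a‖ ^ 2) * (1 - ‖b‖ ^ 2) := by
  simp only [Complex.sq_norm, Complex.normSq_apply, Complex.sub_re, Complex.sub_im, Complex.one_re,
    Complex.one_im, Complex.mul_re, Complex.mul_im, Complex.conj_re, Complex.conj_im]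
  ring

lemma one_sub_norm_sq_pos (ha : ‖a‖ < 1) : 0 < 1 - ‖a‖ ^ 2 :=
  sub_pos.2 (pow_lt_one₀ (norm_nonneg a) ha two_ne_zero)

lemma norm_sub_lt_norm_one_sub_conj_mul (ha : ‖a‖ < 1) (hb : ‖b‖ < 1) :
    ‖a - b‖ < ‖1 - conj a * b‖ := by
  have hpos := mul_pos (one_sub_norm_sq_pos ha) (one_sub_norm_sq_pos hb)
  rw [← norm_one_sub_conj_mul_sq_sub, sub_pos] at hpos
  exact lt_of_pow_lt_pow_left₀ 2 (norm_nonneg _) hpos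

lemma norm_one_sub_conj_mul_pos (ha : ‖a‖ < 1) (hb : ‖b‖ < 1) : 0 < ‖1 - conj a * b‖ :=
  (norm_nonneg _).trans_lt (norm_sub_lt_norm_one_sub_conj_mul ha hb)

lemma pseudoHyperbolicDist_nonneg (a b : ℂ) : 0 ≤ pseudoHyperbolicDist a b := norm_nonneg _

lemma pseudoHyperbolicDist_comm (a b : ℂ) :
    pseudoHyperbolicDist a b = pseudoHyperbolicDist b a := by
  rw [pseudoHyperbolicDist, pseudoHyperbolicDist, norm_div, norm_div,
    norm_one_sub_conj_mul_comm, norm_sub_rev]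

lemma pseudoHyperbolicDist_lt_one (ha : ‖a‖ < 1) (hb : ‖b‖ < 1) :
    pseudoHyperbolicDist a b < 1 := by
  rw [pseudoHyperbolicDist, norm_div, div_lt_one (norm_one_sub_conj_mul_pos ha hb)]
  exact norm_sub_lt_norm_one_sub_conj_mul ha hb

lemma pseudoHyperbolicDist_mul_norm (ha : ‖a‖ < 1) (hb : ‖b‖ < 1) :
    pseudoHyperbolicDist a b * ‖1 - conj a * b‖ = ‖a - b‖ := by
  rw [pseudoHyperbolicDist, norm_div, div_mul_cancel₀ _ (norm_one_sub_conj_mul_pos ha hb).ne']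

lemma one_sub_pseudoHyperbolicDist_sq_mul (ha : ‖a‖ < 1) (hb : ‖b‖ < 1) :
    (1 - pseudoHyperbolicDist a b ^ 2) * ‖1 - conj a * b‖ ^ 2 =
      (1 - ‖a‖ ^ 2) * (1 - ‖b‖ ^ 2) := by
  rw [← norm_one_sub_conj_mul_sq_sub, sub_mul, one_mul, ← mul_pow,
    pseudoHyperbolicDist_mul_norm ha hb]

lemma norm_sub_le_two_mul_pseudoHyperbolicDist (ha : ‖a‖ < 1) (hb : ‖b‖ < 1) :
    ‖a - b‖ ≤ 2 * pseudoHyperbolicDist a b := by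
  have hden : ‖1 - conj a * b‖ ≤ 2 := by
    have hab : ‖a‖ * ‖b‖ ≤ 1 := mul_le_one₀ ha.le (norm_nonneg b) hb.le
    calc ‖1 - conj a * b‖ ≤ ‖(1 : ℂ)‖ + ‖conj a * b‖ := norm_sub_le _ _
      _ ≤ 2 := by rw [norm_one, norm_mul, RCLike.norm_conj]; linarith
  rw [← pseudoHyperbolicDist_mul_norm ha hb, mul_comm 2]
  exact mul_le_mul_of_nonneg_left hden (pseudoHyperbolicDist_nonneg a b)

lemma one_sub_norm_sq_mul_norm_one_sub_conj_mul_le (ha : ‖a‖ < 1) (hb : ‖b‖ < 1) (hc : ‖c‖ < 1) :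
    (1 - ‖b‖ ^ 2) * ‖1 - conj a * c‖ ≤
      (1 + pseudoHyperbolicDist a b * pseudoHyperbolicDist b c) *
        (‖1 - conj a * b‖ * ‖1 - conj b * c‖) := by
  have hsplit : ((1 - ‖b‖ ^ 2 : ℝ) : ℂ) * (1 - conj a * c) =
      (1 - conj a * b) * (1 - conj b * c) + conj (a - b) * (b - c) := by
    push_cast
    rw [← Complex.conj_mul', map_sub]
    ring
  calc (1 - ‖b‖ ^ 2) * ‖1 - conj a * c‖
      = ‖(1 - conj a * b) * (1 - conj b * c) + conj (a - b) * (b - c)‖ := by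
        rw [← hsplit, norm_mul, Complex.norm_real,
          Real.norm_of_nonneg (one_sub_norm_sq_pos hb).le]
    _ ≤ ‖1 - conj a * b‖ * ‖1 - conj b * c‖ + ‖a - b‖ * ‖b - c‖ := by
        simpa only [norm_mul, RCLike.norm_conj] using
          norm_add_le ((1 - conj a * b) * (1 - conj b * c)) (conj (a - b) * (b - c))
    _ = _ := by
        rw [← pseudoHyperbolicDist_mul_norm ha hb, ← pseudoHyperbolicDist_mul_norm hb hc]
        ring

lemma one_sub_pseudoHyperbolicDist_sq_mul_le (ha : ‖a‖ < 1) (hb : ‖b‖ < 1) (hc : ‖c‖ < 1) :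
    (1 - pseudoHyperbolicDist a b ^ 2) * (1 - pseudoHyperbolicDist b c ^ 2) ≤
      (1 + pseudoHyperbolicDist a b * pseudoHyperbolicDist b c) ^ 2 *
        (1 - pseudoHyperbolicDist a c ^ 2) := by
  have hab := one_sub_pseudoHyperbolicDist_sq_mul ha hb
  have hbc := one_sub_pseudoHyperbolicDist_sq_mul hb hc
  have hac := one_sub_pseudoHyperbolicDist_sq_mul ha hc
  have hle := one_sub_norm_sq_mul_norm_one_sub_conj_mul_le ha hb hc
  have hA := norm_one_sub_conj_mul_pos ha hb
  have hB := norm_one_sub_conj_mul_pos hb hc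
  have hC := norm_one_sub_conj_mul_pos ha hc
  have ha' := one_sub_norm_sq_pos ha
  have hb' := one_sub_norm_sq_pos hb
  have hc' := one_sub_norm_sq_pos hc
  set A := ‖1 - conj a * b‖
  set B := ‖1 - conj b * c‖
  set C := ‖1 - conj a * c‖
  set s := pseudoHyperbolicDist a b
  set t := pseudoHyperbolicDist b c
  set u := pseudoHyperbolicDist a c
  refine le_of_mul_le_mul_right ?_ (by positivity : 0 < A ^ 2 * B ^ 2 * C ^ 2)
  calc (1 - s ^ 2) * (1 - t ^ 2) * (A ^ 2 * B ^ 2 * C ^ 2)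
      = ((1 - s ^ 2) * A ^ 2) * ((1 - t ^ 2) * B ^ 2) * C ^ 2 := by ring
    _ = (1 - ‖a‖ ^ 2) * (1 - ‖c‖ ^ 2) * ((1 - ‖b‖ ^ 2) * C) ^ 2 := by rw [hab, hbc]; ring
    _ ≤ (1 - ‖a‖ ^ 2) * (1 - ‖c‖ ^ 2) * ((1 + s * t) * (A * B)) ^ 2 := by gcongr
    _ = (1 + s * t) ^ 2 * (1 - u ^ 2) * (A ^ 2 * B ^ 2 * C ^ 2) := by rw [← hac]; ring

lemma pseudoHyperbolicDist_le_add_div (ha : ‖a‖ < 1) (hb : ‖b‖ < 1) (hc : ‖c‖ < 1) :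
    pseudoHyperbolicDist a c ≤ (pseudoHyperbolicDist a b + pseudoHyperbolicDist b c) /
      (1 + pseudoHyperbolicDist a b * pseudoHyperbolicDist b c) := by
  have hle := one_sub_pseudoHyperbolicDist_sq_mul_le ha hb hc
  have hs := pseudoHyperbolicDist_nonneg a b
  have ht := pseudoHyperbolicDist_nonneg b c
  set s := pseudoHyperbolicDist a b
  set t := pseudoHyperbolicDist b c
  set u := pseudoHyperbolicDist a c
  have hid : (1 + s * t) ^ 2 - (s + t) ^ 2 = (1 - s ^ 2) * (1 - t ^ 2) := by ring
  rw [le_div_iff₀ (by positivity)]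
  refine le_of_sq_le_sq ?_ (add_nonneg hs ht)
  calc (u * (1 + s * t)) ^ 2 = (1 + s * t) ^ 2 - (1 + s * t) ^ 2 * (1 - u ^ 2) := by ring
    _ ≤ (s + t) ^ 2 := by linarith only [hle, hid]

lemma poincareDist_nonneg (ha : ‖a‖ < 1) (hb : ‖b‖ < 1) : 0 ≤ poincareDist a b :=
  (pseudoHyperbolicDist_nonneg a b).trans <|
    self_le_artanh (pseudoHyperbolicDist_nonneg a b) (pseudoHyperbolicDist_lt_one ha hb)

lemma poincareDist_comm (a b : ℂ) : poincareDist a b = poincareDist b a := by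
  rw [poincareDist, poincareDist, pseudoHyperbolicDist_comm]

lemma poincareDist_triangle (ha : ‖a‖ < 1) (hb : ‖b‖ < 1) (hc : ‖c‖ < 1) :
    poincareDist a c ≤ poincareDist a b + poincareDist b c := by
  have hs₀ := pseudoHyperbolicDist_nonneg a b
  have ht₀ := pseudoHyperbolicDist_nonneg b c
  have hs₁ := pseudoHyperbolicDist_lt_one ha hb
  have ht₁ := pseudoHyperbolicDist_lt_one hb hc
  rw [poincareDist, poincareDist, poincareDist,
    artanh_add_artanh ⟨by linarith, hs₁⟩ ⟨by linarith, ht₁⟩]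
  refine artanh_le_artanh (neg_one_lt_zero.trans_le (pseudoHyperbolicDist_nonneg a c)) ?_
    (pseudoHyperbolicDist_le_add_div ha hb hc)
  rw [div_lt_one (by positivity)]
  linarith [mul_pos (sub_pos.2 hs₁) (sub_pos.2 ht₁)]

lemma norm_sub_le_two_mul_poincareDist (ha : ‖a‖ < 1) (hb : ‖b‖ < 1) :
    ‖a - b‖ ≤ 2 * poincareDist a b :=
  (norm_sub_le_two_mul_pseudoHyperbolicDist ha hb).trans <| by
    gcongr
    exact self_le_artanh (pseudoHyperbolicDist_nonneg a b) (pseudoHyperbolicDist_lt_one ha hb)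

end PoincareDisc

section CaratheodoryDistance

variable {V : Type*} [NormedAddCommGroup V] [NormedSpace ℂ V]
  {E : Type*} [NormedAddCommGroup E] [NormedSpace ℂ E]
  {D U : Set V} {x y z : V}

/-- The holomorphic maps from `D` to the open unit disc, the competitors in the definition of the
Carathéodory distance of `D`. -/
def discMaps (D : Set V) : Set (V → ℂ) := {f | DifferentiableOn ℂ f D ∧ ∀ z ∈ D, ‖f z‖ < 1}

instance nonempty_discMaps (D : Set V) : Nonempty (discMaps D) :=
  ⟨0, differentiableOn_const 0, by simp⟩

lemma discMaps_anti (hUD : U ⊆ D) : discMaps D ⊆ discMaps U :=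
  fun _ hf => ⟨hf.1.mono hUD, fun z hz => hf.2 z (hUD hz)⟩

lemma pseudoHyperbolicDist_le_dist_div {f : V → ℂ} {R : ℝ} (hf : f ∈ discMaps (ball x R))
    (hy : y ∈ ball x R) : pseudoHyperbolicDist (f y) (f x) ≤ dist y x / R := by
  have hx : ‖f x‖ < 1 := hf.2 x (mem_ball_self (nonempty_ball.1 ⟨y, hy⟩))
  -- Post-composing with a disc automorphism that sends `f x` to `0` reduces to the Schwarz lemma.
  let h : V → ℂ := fun w => (f w - f x) / (1 - conj (f x) * f w)
  have norm_h (w : V) : ‖h w‖ = pseudoHyperbolicDist (f w) (f x) := by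
    rw [pseudoHyperbolicDist, norm_div, norm_div, norm_one_sub_conj_mul_comm]
  have h_zero : h x = 0 := by simp only [h, sub_self, zero_div]
  have h_diff : DifferentiableOn ℂ h (ball x R) := by
    simp only [h, div_eq_mul_inv]
    exact (hf.1.sub_const _).mul <| DifferentiableOn.fun_inv
      ((differentiableOn_const _).sub ((differentiableOn_const _).mul hf.1))
      fun w hw => norm_pos_iff.1 (norm_one_sub_conj_mul_pos hx (hf.2 w hw))
  have h_maps : MapsTo h (ball x R) (closedBall (h x) 1) := fun w hw => by
    rw [h_zero, mem_closedBall_zero_iff, norm_h]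
    exact (pseudoHyperbolicDist_lt_one (hf.2 w hw) hx).le
  have hschwarz := Complex.dist_le_div_mul_dist_of_mapsTo_ball h_diff h_maps hy
  rwa [h_zero, dist_zero_right, norm_h, one_div_mul_eq_div] at hschwarz

lemma poincareDist_le_artanh_dist_div {f : V → ℂ} {R : ℝ} (hf : f ∈ discMaps D)
    (hball : ball x R ⊆ D) (hy : y ∈ ball x R) :
    poincareDist (f y) (f x) ≤ artanh (dist y x / R) :=
  artanh_le_artanh (neg_one_lt_zero.trans_le (pseudoHyperbolicDist_nonneg _ _))
    ((div_lt_one (nonempty_ball.1 ⟨y, hy⟩)).2 hy)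
    (pseudoHyperbolicDist_le_dist_div (discMaps_anti hball hf) hy)

lemma caraDist_eq_iSup (D : Set V) (x y : V) :
    caraDist D x y = ⨆ f : discMaps D, poincareDist (f.1 x) (f.1 y) := by
  rw [caraDist, iSup]
  congr 1
  ext t
  constructor
  · rintro ⟨f, hf, hf', rfl⟩
    exact ⟨⟨f, hf, hf'⟩, rfl⟩
  · rintro ⟨⟨f, hf, hf'⟩, rfl⟩
    exact ⟨f, hf, hf', rfl⟩

lemma caraDist_comm (D : Set V) (x y : V) : caraDist D x y = caraDist D y x := by
  simp only [caraDist_eq_iSup, poincareDist_comm]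

lemma caraDist_nonneg (hx : x ∈ D) (hy : y ∈ D) : 0 ≤ caraDist D x y := by
  rw [caraDist_eq_iSup]
  exact Real.iSup_nonneg fun f => poincareDist_nonneg (f.2.2 x hx) (f.2.2 y hy)

lemma caraDist_le {r : ℝ} (h : ∀ f ∈ discMaps D, poincareDist (f x) (f y) ≤ r) :
    caraDist D x y ≤ r := by
  rw [caraDist_eq_iSup]
  exact ciSup_le fun f => h f.1 f.2

lemma tendsto_caraDist_nhds_zero (hD : IsOpen D) (hz : z ∈ D) :
    Tendsto (fun w => caraDist D w z) (𝓝 z) (𝓝 0) := by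
  obtain ⟨R, hR, hball⟩ := Metric.isOpen_iff.1 hD z hz
  have hdist : Tendsto (fun w => dist w z / R) (𝓝 z) (𝓝 0) :=
    (by fun_prop : Continuous fun w => dist w z / R).tendsto' z 0 (by simp)
  have hartanh : Tendsto (fun w => artanh (dist w z / R)) (𝓝 z) (𝓝 0) := by
    simpa only [artanh_zero, comp_def] using continuousAt_artanh_zero.tendsto.comp hdist
  refine squeeze_zero' ?_ ?_ hartanh
  · filter_upwards [hD.mem_nhds hz] with w hw using caraDist_nonneg hw hz
  · filter_upwards [ball_mem_nhds z hR] with w hw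
    exact caraDist_le fun f hf => poincareDist_le_artanh_dist_div hf hball hw

lemma bddAbove_range_poincareDist (hD : IsOpen D) (hDc : IsPreconnected D) (hx : x ∈ D)
    (hy : y ∈ D) : BddAbove (range fun f : discMaps D => poincareDist (f.1 x) (f.1 y)) := by
  refine hDc.induction₂
    (fun x y => BddAbove (range fun f : discMaps D => poincareDist (f.1 x) (f.1 y)))
    (fun x hx => ?_) ?_ ?_ hx hy
  · obtain ⟨R, hR, hball⟩ := Metric.isOpen_iff.1 hD x hx
    filter_upwards [mem_nhdsWithin_of_mem_nhds (ball_mem_nhds x hR)] with y hy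
    refine ⟨artanh (dist y x / R), forall_mem_range.2 fun f => ?_⟩
    rw [poincareDist_comm]
    exact poincareDist_le_artanh_dist_div f.2 hball hy
  · rintro x y z hx hy hz ⟨r, hr⟩ ⟨s, hs⟩
    refine ⟨r + s, forall_mem_range.2 fun f => ?_⟩
    exact (poincareDist_triangle (f.2.2 x hx) (f.2.2 y hy) (f.2.2 z hz)).trans
      (add_le_add (hr (mem_range_self f)) (hs (mem_range_self f)))
  · intro x y _ _ h
    simpa only [poincareDist_comm] using h

lemma poincareDist_le_caraDist (hD : IsOpen D) (hDc : IsPreconnected D) (hx : x ∈ D) (hy : y ∈ D)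
    {f : V → ℂ} (hf : f ∈ discMaps D) : poincareDist (f x) (f y) ≤ caraDist D x y := by
  rw [caraDist_eq_iSup]
  exact le_ciSup (bddAbove_range_poincareDist hD hDc hx hy) ⟨f, hf⟩

lemma caraDist_triangle (hD : IsOpen D) (hDc : IsPreconnected D) (hx : x ∈ D) (hy : y ∈ D)
    (hz : z ∈ D) : caraDist D x z ≤ caraDist D x y + caraDist D y z :=
  caraDist_le fun _ hf =>
    (poincareDist_triangle (hf.2 x hx) (hf.2 y hy) (hf.2 z hz)).trans <|
      add_le_add (poincareDist_le_caraDist hD hDc hx hy hf)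
        (poincareDist_le_caraDist hD hDc hy hz hf)

lemma norm_sub_le_two_mul_caraDist (hD : IsOpen D) (hDc : IsPreconnected D) {f : V → E}
    (hf : DifferentiableOn ℂ f D) (hfD : MapsTo f D (ball 0 1)) (hx : x ∈ D) (hy : y ∈ D) :
    ‖f x - f y‖ ≤ 2 * caraDist D x y := by
  obtain ⟨l, hl, hlxy⟩ := exists_dual_vector'' ℂ (f x - f y)
  have hlf : l ∘ f ∈ discMaps D :=
    ⟨l.differentiable.comp_differentiableOn hf, fun z hz =>
      (l.le_of_opNorm_le hl (f z)).trans_lt <| by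
        simpa only [one_mul] using mem_ball_zero_iff.1 (hfD hz)⟩
  calc ‖f x - f y‖ = ‖(l ∘ f) x - (l ∘ f) y‖ := by
        rw [comp_apply, comp_apply, ← map_sub, hlxy, RCLike.norm_ofReal, abs_norm]
    _ ≤ 2 * poincareDist ((l ∘ f) x) ((l ∘ f) y) :=
        norm_sub_le_two_mul_poincareDist (hlf.2 x hx) (hlf.2 y hy)
    _ ≤ 2 * caraDist D x y := by
        gcongr
        exact poincareDist_le_caraDist hD hDc hx hy hlf

/-- Cauchy sequences for the Carathéodory distance of `D`. Membership of the terms in `D` is not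
part of the definition. -/
def IsCaraCauchy (D : Set V) (x : ℕ → V) : Prop :=
  ∀ ε : ℝ, 0 < ε → ∃ N : ℕ, ∀ m ≥ N, ∀ n ≥ N, caraDist D (x m) (x n) < ε

lemma isCaraCauchy_of_tendsto (hD : IsOpen D) (hDc : IsPreconnected D) {x : ℕ → V}
    (hx : ∀ n, x n ∈ D) (hz : z ∈ D) (hxz : Tendsto x atTop (𝓝 z)) : IsCaraCauchy D x := by
  intro ε hε
  obtain ⟨N, hN⟩ := eventually_atTop.1 <|
    ((tendsto_caraDist_nhds_zero hD hz).comp hxz).eventually_lt_const (half_pos hε)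
  refine ⟨N, fun m hm n hn => ?_⟩
  calc caraDist D (x m) (x n) ≤ caraDist D (x m) z + caraDist D z (x n) :=
        caraDist_triangle hD hDc (hx m) hz (hx n)
    _ < ε / 2 + ε / 2 := by
        rw [caraDist_comm D z]
        exact add_lt_add (hN m hm) (hN n hn)
    _ = ε := add_halves ε

namespace IsCaraCauchy

variable {x : ℕ → V}

lemma of_caraDist_le (hxU : IsCaraCauchy U x)
    (hle : ∀ m n, caraDist D (x m) (x n) ≤ caraDist U (x m) (x n)) : IsCaraCauchy D x :=
  fun ε hε => (hxU ε hε).imp fun _ hN m hm n hn => (hle m n).trans_lt (hN m hm n hn)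

lemma cauchySeq_comp (hxC : IsCaraCauchy D x) (hD : IsOpen D) (hDc : IsPreconnected D)
    (hx : ∀ n, x n ∈ D) {f : V → E} (hf : DifferentiableOn ℂ f D)
    (hfD : MapsTo f D (ball 0 1)) : CauchySeq (f ∘ x) := by
  rw [Metric.cauchySeq_iff]
  intro ε hε
  obtain ⟨N, hN⟩ := hxC (ε / 2) (half_pos hε)
  refine ⟨N, fun m hm n hn => ?_⟩
  calc dist (f (x m)) (f (x n)) = ‖f (x m) - f (x n)‖ := dist_eq_norm _ _
    _ ≤ 2 * caraDist D (x m) (x n) := norm_sub_le_two_mul_caraDist hD hDc hf hfD (hx m) (hx n)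
    _ < ε := by linarith [hN m hm n hn]

lemma exists_tendsto_of_embedding [CompleteSpace E] (hxC : IsCaraCauchy D x) (hD : IsOpen D)
    (hDc : IsPreconnected D) (hx : ∀ n, x n ∈ D) {f : V → E} {g : E → V}
    (hf : DifferentiableOn ℂ f D) (hfD : MapsTo f D (ball 0 1)) (hg : ContinuousOn g (f '' D))
    (hgf : LeftInvOn g f D) {K : Set E} (hK : IsClosed K) (hKD : K ⊆ f '' D)
    (hxK : ∀ᶠ n in atTop, f (x n) ∈ K) : ∃ z ∈ D, Tendsto x atTop (𝓝 z) := by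
  obtain ⟨y, hy⟩ := cauchySeq_tendsto_of_complete (hxC.cauchySeq_comp hD hDc hx hf hfD)
  obtain ⟨z, hz, rfl⟩ := hKD (hK.mem_of_tendsto hy hxK)
  refine ⟨z, hz, ?_⟩
  have hlim : Tendsto (f ∘ x) atTop (𝓝[f '' D] f z) :=
    tendsto_nhdsWithin_iff.2 ⟨hy, Eventually.of_forall fun n => mem_image_of_mem f (hx n)⟩
  have hglim := (hg (f z) (mem_image_of_mem f hz)).tendsto.comp hlim
  rw [hgf hz] at hglim
  exact hglim.congr fun n => hgf (hx n)

end IsCaraCauchy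

end CaratheodoryDistance

section SqueezingFunction

variable {V : Type*} [NormedAddCommGroup V] [NormedSpace ℂ V]
  {H : Type*} [NormedAddCommGroup H] [InnerProductSpace ℂ H] {D : Set V}

lemma exists_embedding_of_lt_squeezingFun {p : V} {t : ℝ} (ht : 0 ≤ t)
    (h : t < squeezingFun H D p) :
    ∃ f : V → H, ∃ g : H → V, DifferentiableOn ℂ f D ∧ MapsTo f D (ball 0 1) ∧
      DifferentiableOn ℂ g (f '' D) ∧ LeftInvOn g f D ∧ f p = 0 ∧ closedBall 0 t ⊆ f '' D := by
  unfold squeezingFun at h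
  obtain ⟨r, ⟨-, f, g, hf, -, -, hg, hgf, hfD, hfp, hball⟩, htr⟩ := exists_lt_of_lt_csSup
    (nonempty_iff_ne_empty.2 fun hempty => by
      rw [hempty, Real.sSup_empty] at h
      exact h.not_ge ht) h
  exact ⟨f, g, hf, mapsTo_iff_image_subset.2 hfD, hg, hgf, hfp,
    (closedBall_subset_ball htr).trans hball⟩

lemma IsCaraCauchy.exists_tendsto_of_le_squeezingFun [CompleteSpace H] {x : ℕ → V}
    (hxC : IsCaraCauchy D x) (hD : IsOpen D) (hDc : IsPreconnected D) (hx : ∀ n, x n ∈ D) {r : ℝ}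
    (hr : 0 < r) (hsq : ∀ n, r ≤ squeezingFun H D (x n)) : ∃ z ∈ D, Tendsto x atTop (𝓝 z) := by
  obtain ⟨N, hN⟩ := hxC (r / 4) (by positivity)
  obtain ⟨f, g, hf, hfD, hg, hgf, hfN, hball⟩ := exists_embedding_of_lt_squeezingFun
    (half_pos hr).le ((half_lt_self hr).trans_le (hsq N))
  refine hxC.exists_tendsto_of_embedding hD hDc hx hf hfD hg.continuousOn hgf isClosed_closedBall
    hball ?_
  filter_upwards [eventually_ge_atTop N] with n hn
  rw [mem_closedBall_zero_iff]
  calc ‖f (x n)‖ = ‖f (x n) - f (x N)‖ := by rw [hfN, sub_zero]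
    _ ≤ 2 * caraDist D (x n) (x N) := norm_sub_le_two_mul_caraDist hD hDc hf hfD (hx n) (hx N)
    _ ≤ r / 2 := by linarith [hN n hn N le_rfl]

end SqueezingFunction

section IdentityTheorem

variable {V : Type*} [NormedAddCommGroup V] [NormedSpace ℂ V]
  {E : Type*} [NormedAddCommGroup E] [NormedSpace ℂ E] [CompleteSpace E]
  {F G : V → E} {U : Set V} {p : V}

lemma eqOn_of_differentiableOn_of_convex_of_eventuallyEq (hU : IsOpen U) (hUc : Convex ℝ U)
    (hF : DifferentiableOn ℂ F U) (hG : DifferentiableOn ℂ G U) (hp : p ∈ U)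
    (hFG : F =ᶠ[𝓝 p] G) : EqOn F G U := by
  intro y hy
  let L : ℂ → V := fun t => p + t • (y - p)
  have hL : Differentiable ℂ L := by fun_prop
  have hL₀ : L 0 = p := by simp only [L, zero_smul, add_zero]
  have hL₁ : L 1 = y := by simp only [L, one_smul, add_sub_cancel]
  have hopen : IsOpen (L ⁻¹' U) := hU.preimage hL.continuous
  have hconn : IsPreconnected (L ⁻¹' U) :=
    ((hUc.translate_preimage_right p).linear_preimage
      ((LinearMap.toSpanSingleton ℂ V (y - p)).restrictScalars ℝ)).isPreconnected
  have analytic {Φ : V → E} (hΦ : DifferentiableOn ℂ Φ U) : AnalyticOnNhd ℂ (Φ ∘ L) (L ⁻¹' U) :=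
    (hΦ.comp hL.differentiableOn (mapsTo_preimage L U)).analyticOnNhd hopen
  have hlim : Tendsto L (𝓝 0) (𝓝 p) := hL₀ ▸ hL.continuous.tendsto 0
  have heq := (analytic hF).eqOn_of_preconnected_of_eventuallyEq (analytic hG) hconn
    (mem_preimage.2 (hL₀ ▸ hp)) (hlim.eventually hFG) (mem_preimage.2 (hL₁ ▸ hy))
  simpa only [comp_apply, hL₁] using heq

lemma eqOn_of_differentiableOn_of_isPreconnected_of_eventuallyEq (hU : IsOpen U)
    (hUc : IsPreconnected U) (hF : DifferentiableOn ℂ F U) (hG : DifferentiableOn ℂ G U)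
    (hp : p ∈ U) (hFG : F =ᶠ[𝓝 p] G) : EqOn F G U := by
  suffices hsub : U ⊆ {q | F =ᶠ[𝓝 q] G} from fun z hz => (hsub hz).eq_of_nhds
  refine hUc.subset_of_closure_inter_subset isOpen_setOfPred_eventually_nhds ⟨p, hp, hFG⟩ ?_
  rintro z ⟨hz, hzU⟩
  obtain ⟨R, hR, hball⟩ := Metric.isOpen_iff.1 hU z hzU
  obtain ⟨q, hq, hzq⟩ := Metric.mem_closure_iff.1 hz R hR
  exact (eqOn_of_differentiableOn_of_convex_of_eventuallyEq isOpen_ball (convex_ball z R)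
    (hF.mono hball) (hG.mono hball) (mem_ball'.2 hzq) hq).eventuallyEq_of_mem (ball_mem_nhds z hR)

end IdentityTheorem

section HolomorphicExtension

lemma exists_mem_closure_connectedComponentIn_notMem {X : Type*} [TopologicalSpace X]
    [LocallyConnectedSpace X] {D U : Set X} (hD : IsOpen D) (hU : IsOpen U)
    (hUc : IsPreconnected U) (hUD : ¬ U ⊆ D) {w : X} (hw : w ∈ D ∩ U) :
    ∃ a ∈ U, a ∈ closure (connectedComponentIn (D ∩ U) w) ∧ a ∉ D := by
  by_contra! hmem
  have hsub := connectedComponentIn_subset (D ∩ U) w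
  have hwC := mem_connectedComponentIn hw
  refine hUD (Subset.trans ?_ (hsub.trans inter_subset_left))
  refine hUc.subset_of_closure_inter_subset (hD.inter hU).connectedComponentIn ⟨w, hw.2, hwC⟩ ?_
  rintro a ⟨ha, haU⟩
  have haDU : a ∈ D ∩ U := ⟨hmem a haU ha, haU⟩
  have hins : IsPreconnected (insert a (connectedComponentIn (D ∩ U) w)) :=
    isPreconnected_connectedComponentIn.subset_closure (subset_insert _ _)
      (insert_subset ha subset_closure)
  exact hins.subset_connectedComponentIn (mem_insert_of_mem a hwC)
    (insert_subset haDU hsub) (mem_insert a _)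

variable {V : Type*} [NormedAddCommGroup V] [NormedSpace ℂ V] {D U W Ω : Set V}

/-- Every holomorphic function on `D` agrees on `W` with a holomorphic function on `U`. This is the
extension property that `IsDomainOfHolomorphy D` excludes for suitable `U` and `W`. -/
def ExtendsHolomorphically (D U W : Set V) : Prop :=
  ∀ f : V → ℂ, DifferentiableOn ℂ f D → ∃ F : V → ℂ, DifferentiableOn ℂ F U ∧ EqOn f F W

namespace ExtendsHolomorphically

lemma of_isPreconnected (h : ExtendsHolomorphically D U W) (hΩ : IsOpen Ω)
    (hΩc : IsPreconnected Ω) (hΩD : Ω ⊆ D ∩ U) (hW : IsOpen W) (hΩW : (Ω ∩ W).Nonempty) :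
    ExtendsHolomorphically D U Ω := by
  intro f hf
  obtain ⟨F, hF, hfF⟩ := h f hf
  obtain ⟨w, hwΩ, hwW⟩ := hΩW
  exact ⟨F, hF, eqOn_of_differentiableOn_of_isPreconnected_of_eventuallyEq hΩ hΩc
    (hf.mono (hΩD.trans inter_subset_left)) (hF.mono (hΩD.trans inter_subset_right)) hwΩ
    (hfF.eventuallyEq_of_mem (hW.mem_nhds hwW))⟩

lemma mapsTo_image (h : ExtendsHolomorphically D U W) (hU : IsOpen U) (hUc : IsPreconnected U)
    (hW : IsOpen W) (hWne : W.Nonempty) (hWD : W ⊆ D ∩ U) {f F : V → ℂ}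
    (hf : DifferentiableOn ℂ f D) (hF : DifferentiableOn ℂ F U) (hfF : EqOn f F W) :
    MapsTo F U (f '' D) := by
  intro u hu
  by_contra hFu
  have hne : ∀ z ∈ D, f z - F u ≠ 0 := fun z hz h0 => hFu ⟨z, hz, sub_eq_zero.1 h0⟩
  obtain ⟨G, hG, hfG⟩ := h (fun z => (f z - F u)⁻¹) ((hf.sub_const _).fun_inv hne)
  have hGW : EqOn (fun z => G z * (F z - F u)) (fun _ => 1) W := fun z hz => by
    simp only [← hfG hz, ← hfF hz, inv_mul_cancel₀ (hne z (hWD hz).1)]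
  obtain ⟨w, hw⟩ := hWne
  have hGU := eqOn_of_differentiableOn_of_isPreconnected_of_eventuallyEq hU hUc
    (hG.mul (hF.sub_const _)) (differentiableOn_const 1) (hWD hw).2
    (hGW.eventuallyEq_of_mem (hW.mem_nhds hw)) hu
  simp only [Pi.mul_apply, sub_self, mul_zero, zero_ne_one] at hGU

lemma caraDist_le_caraDist (h : ExtendsHolomorphically D U W) (hU : IsOpen U)
    (hUc : IsPreconnected U) (hW : IsOpen W) (hWD : W ⊆ D ∩ U) {x y : V} (hx : x ∈ W) (hy : y ∈ W) :
    caraDist D x y ≤ caraDist U x y := by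
  refine caraDist_le fun f hf => ?_
  obtain ⟨F, hF, hfF⟩ := h f hf.1
  have hFU : F ∈ discMaps U := by
    refine ⟨hF, fun u hu => ?_⟩
    obtain ⟨z, hz, hzu⟩ := h.mapsTo_image hU hUc hW ⟨x, hx⟩ hWD hf.1 hF hfF hu
    exact hzu ▸ hf.2 z hz
  rw [hfF hx, hfF hy]
  exact poincareDist_le_caraDist hU hUc (hWD hx).2 (hWD hy).2 hFU

end ExtendsHolomorphically

lemma isDomainOfHolomorphy_of_isCaraCauchy_limit_mem (hD : IsOpen D)
    (hlim : ∀ (x : ℕ → V) (a : V), (∀ n, x n ∈ D) → IsCaraCauchy D x → Tendsto x atTop (𝓝 a) →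
      a ∈ D) : IsDomainOfHolomorphy D := by
  rintro ⟨U, W, hU, hUc, -, hUD, hW, ⟨w, hw⟩, hWD, hext : ExtendsHolomorphically D U W⟩
  have hΩ : IsOpen (connectedComponentIn (D ∩ U) w) := (hD.inter hU).connectedComponentIn
  have hΩD := connectedComponentIn_subset (D ∩ U) w
  have hextΩ := hext.of_isPreconnected hΩ isPreconnected_connectedComponentIn hΩD hW
    ⟨w, mem_connectedComponentIn (hWD hw), hw⟩
  obtain ⟨a, haU, haΩ, haD⟩ := exists_mem_closure_connectedComponentIn_notMem hD hU
    hUc.isPreconnected hUD (hWD hw)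
  obtain ⟨x, hxΩ, hxa⟩ := mem_closure_iff_seq_limit.1 haΩ
  have hxU : IsCaraCauchy U x :=
    isCaraCauchy_of_tendsto hU hUc.isPreconnected (fun n => (hΩD (hxΩ n)).2) haU hxa
  have hxD : IsCaraCauchy D x := hxU.of_caraDist_le fun m n =>
    hextΩ.caraDist_le_caraDist hU hUc.isPreconnected hΩ hΩD (hxΩ m) (hxΩ n)
  exact haD (hlim x a (fun n => (hΩD (hxΩ n)).1) hxD hxa)

end HolomorphicExtension

theorem stmt_10_general
    {V : Type*} [NormedAddCommGroup V] [NormedSpace ℂ V]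
    {H : Type*} [NormedAddCommGroup H] [InnerProductSpace ℂ H] [CompleteSpace H]
    (D : Set V) (hD : IsOpen D) (hDc : IsPreconnected D)
    (hHHR : ∃ r : ℝ, 0 < r ∧ ∀ p ∈ D, r ≤ squeezingFun H D p) :
    (∀ x : ℕ → V, (∀ n, x n ∈ D) →
      (∀ ε : ℝ, 0 < ε → ∃ N : ℕ, ∀ m ≥ N, ∀ n ≥ N, caraDist D (x m) (x n) < ε) →
      ∃ z ∈ D, Tendsto (fun n => caraDist D (x n) z) atTop (𝓝 0)) ∧
    IsDomainOfHolomorphy D := by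
  obtain ⟨r, hr, hsq⟩ := hHHR
  have exists_limit (x : ℕ → V) (hx : ∀ n, x n ∈ D) (hxC : IsCaraCauchy D x) :
      ∃ z ∈ D, Tendsto x atTop (𝓝 z) :=
    hxC.exists_tendsto_of_le_squeezingFun hD hDc hx hr fun n => hsq (x n) (hx n)
  constructor
  · intro x hx hxC
    obtain ⟨z, hz, hxz⟩ := exists_limit x hx hxC
    exact ⟨z, hz, (tendsto_caraDist_nhds_zero hD hz).comp hxz⟩
  · refine isDomainOfHolomorphy_of_isCaraCauchy_limit_mem hD fun x a hx hxC hxa => ?_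
    obtain ⟨z, hz, hxz⟩ := exists_limit x hx hxC
    exact tendsto_nhds_unique hxa hxz ▸ hz

/-- Every HHR bounded domain `D` in a complex Banach space (a bounded domain
admitting a holomorphic embedding into a Hilbert ball and whose squeezing function has a
strictly positive lower bound) is complete with respect to the Carathéodory distance, and
hence is a domain of holomorphy. -/
theorem stmt_10
    {V : Type*} [NormedAddCommGroup V] [NormedSpace ℂ V] [CompleteSpace V]
    {H : Type*} [NormedAddCommGroup H] [InnerProductSpace ℂ H] [CompleteSpace H]
    (D : Set V) (hD : IsOpen D) (hDc : IsConnected D) (hDb : Bornology.IsBounded D)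
    (hemb : ∃ f : V → H, ∃ g : H → V,
      DifferentiableOn ℂ f D ∧ IsOpen (f '' D) ∧ Set.InjOn f D ∧
      DifferentiableOn ℂ g (f '' D) ∧ (∀ z ∈ D, g (f z) = z) ∧ f '' D ⊆ ball (0 : H) 1)
    (hHHR : ∃ r : ℝ, 0 < r ∧ ∀ p ∈ D, r ≤ squeezingFun H D p) :
    (∀ x : ℕ → V, (∀ n, x n ∈ D) →
      (∀ ε : ℝ, 0 < ε → ∃ N : ℕ, ∀ m ≥ N, ∀ n ≥ N, caraDist D (x m) (x n) < ε) →
      ∃ z ∈ D, Filter.Tendsto (fun n => caraDist D (x n) z) Filter.atTop (nhds 0)) ∧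
    IsDomainOfHolomorphy D :=
  stmt_10_general D hD hDc.isPreconnected hHHR
end

section
/- Let h : D → D' be a biholomorphic map between the open unit balls D, D' of complex Banach spaces V, V' with h(0) = 0. Then h is the restriction to D of its derivative h'(0) : V → V', which is a surjective linear isometry; consequently h extends continuously to the closed balls and maps ∂D onto ∂D'. -/
open Metric Set

/-!
Let `T = h'(0)` and let `S` be the derivative at the origin of the inverse of `h`. The Schwarz lemma
bounds both operator norms by one and the chain rule makes them inverse to each other, so `T` is a
surjective isometry. Thus `T⁻¹ ∘ h` is a holomorphic self-map of the unit ball with the same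
1-jet at the origin as the identity, and it is the identity by Cartan's uniqueness theorem.

Cartan's theorem, for a self-map `f` of a bounded domain, needs no power series. All iterates `fⁿ`
are tangent to the identity at the fixed point, so the Schwarz lemma makes every displacement
`fⁿ - id` a `1/2`-Lipschitz map near that point, uniformly in `n`. Summing along an orbit,
`fⁿ z - z` differs from `n (f z - z)` by at most `n/2` times the supremum `M` of `‖fⁿ z - z‖`;
dividing by `n → ∞` gives `‖f z - z‖ ≤ M / 2`. This holds for each iterate as well, whence
`M ≤ M / 2`, and `f` is the identity near the fixed point, hence on the whole domain by the
identity theorem.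
-/

open Asymptotics Bornology Filter Function
open scoped NNReal Topology

section LipschitzDisplacement

variable {E : Type*} [NormedAddCommGroup E] {f : E → E} {s : Set E} {K : ℝ≥0} {z : E} {M : ℝ}

theorem norm_iterate_sub_sub_nsmul_le (hf : LipschitzOnWith K (fun x ↦ f x - x) s)
    (hs : ∀ n, f^[n] z ∈ s) (hM : ∀ n, ‖f^[n] z - z‖ ≤ M) (n : ℕ) :
    ‖f^[n] z - z - n • (f z - z)‖ ≤ n * (K * M) := by
  have telescope : f^[n] z - z - n • (f z - z) =
      ∑ k ∈ Finset.range n, ((f (f^[k] z) - f^[k] z) - (f z - z)) := by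
    have := Finset.sum_range_sub (fun k ↦ f^[k] z) n
    simp only [iterate_succ_apply', iterate_zero_apply] at this
    rw [Finset.sum_sub_distrib, this, Finset.sum_const, Finset.card_range]
  have term_le (k : ℕ) : ‖(f (f^[k] z) - f^[k] z) - (f z - z)‖ ≤ K * M :=
    (hf.norm_sub_le (hs k) (hs 0)).trans (by gcongr; exact hM k)
  calc ‖f^[n] z - z - n • (f z - z)‖
      ≤ ∑ _k ∈ Finset.range n, K * M := telescope ▸ norm_sum_le_of_le _ fun k _ ↦ term_le k
    _ = n * (K * M) := by rw [Finset.sum_const, Finset.card_range, nsmul_eq_mul]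

variable [NormedSpace ℝ E]

theorem norm_apply_sub_le_of_lipschitzOnWith_sub_id
    (hf : LipschitzOnWith K (fun x ↦ f x - x) s) (hs : ∀ n, f^[n] z ∈ s)
    (hM : ∀ n, ‖f^[n] z - z‖ ≤ M) : ‖f z - z‖ ≤ K * M := by
  by_contra! hlt
  obtain ⟨n, hn⟩ := exists_lt_nsmul (sub_pos.2 hlt) M
  have hgap : n * ‖f z - z‖ - M ≤ n * (K * M) := calc
    n * ‖f z - z‖ - M ≤ ‖n • (f z - z)‖ - ‖f^[n] z - z‖ := by
      rw [RCLike.norm_nsmul ℝ, nsmul_eq_mul]; gcongr; exact hM n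
    _ ≤ ‖f^[n] z - z - n • (f z - z)‖ := by
      rw [norm_sub_rev (f^[n] z - z)]; exact norm_sub_norm_le _ _
    _ ≤ n * (K * M) := norm_iterate_sub_sub_nsmul_le hf hs hM n
  rw [nsmul_eq_mul, mul_sub] at hn
  linarith

theorem isFixedPt_of_lipschitzOnWith_iterate_sub_id (hK : K < 1)
    (hf : ∀ n, LipschitzOnWith K (fun x ↦ f^[n] x - x) s) (hs : ∀ n, f^[n] z ∈ s)
    (hb : IsBounded (range fun n ↦ f^[n] z)) : IsFixedPt f z := by
  set M := ⨆ n, ‖f^[n] z - z‖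
  have hbdd : BddAbove (range fun n ↦ ‖f^[n] z - z‖) := by
    obtain ⟨C, hC⟩ := isBounded_iff.1 hb
    exact ⟨C, forall_mem_range.2 fun n ↦
      dist_eq_norm (f^[n] z) z ▸ hC (mem_range_self n) (mem_range_self 0)⟩
  have le_sup (n : ℕ) : ‖f^[n] z - z‖ ≤ M := le_ciSup hbdd n
  have contract (j : ℕ) : ‖f^[j] z - z‖ ≤ K * M :=
    norm_apply_sub_le_of_lipschitzOnWith_sub_id (hf j)
      (fun n ↦ iterate_mul f j n ▸ hs (j * n)) fun n ↦ iterate_mul f j n ▸ le_sup (j * n)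
  have hM : M ≤ 0 := by
    have : M ≤ K * M := ciSup_le contract
    have : (K : ℝ) < 1 := hK
    nlinarith
  exact sub_eq_zero.1 (norm_le_zero_iff.1 ((le_sup 1).trans hM))

end LipschitzDisplacement

section Holomorphic

variable {E F : Type*} [NormedAddCommGroup E] [NormedSpace ℂ E] [NormedAddCommGroup F]
  [NormedSpace ℂ F] {f g : E → F} {U : Set E} {a c z w : E} {b : F} {B R ρ : ℝ}

theorem dist_le_mul_div_sq_of_hasFDerivAt_zero (hd : DifferentiableOn ℂ f (ball c R))
    (hf : MapsTo f (ball c R) (closedBall (f c) B)) (hf' : HasFDerivAt f (0 : E →L[ℂ] F) c)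
    (hz : z ∈ ball c R) : dist (f z) (f c) ≤ B * (dist z c / R) ^ 2 :=
  Complex.dist_le_mul_div_pow_of_mapsTo_ball_of_isLittleO hd hf
    (by simpa using hf'.isLittleO.norm_right) hz

theorem dist_le_div_mul_dist_of_mapsTo_ball_three_mul (hd : DifferentiableOn ℂ f (ball c (3 * ρ)))
    (hf : MapsTo f (ball c (3 * ρ)) (closedBall b B)) (hw : w ∈ ball c ρ) (hz : z ∈ ball c ρ) :
    dist (f w) (f z) ≤ B / ρ * dist w z := by
  rw [mem_ball] at hw hz
  have hsub : ball z (2 * ρ) ⊆ ball c (3 * ρ) := ball_subset_ball' (by linarith)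
  have hmaps : MapsTo f (ball z (2 * ρ)) (closedBall (f z) (2 * B)) := fun x hx ↦ by
    have hz3 : z ∈ ball c (3 * ρ) := mem_ball.2 (by linarith [dist_nonneg (x := z) (y := c)])
    have hfx : dist (f x) b ≤ B := hf (hsub hx)
    have hfz : dist (f z) b ≤ B := hf hz3
    exact mem_closedBall.2 ((dist_triangle_right _ _ b).trans (by linarith))
  have hwz : w ∈ ball z (2 * ρ) :=
    mem_ball.2 ((dist_triangle_right _ _ c).trans_lt (by linarith))
  simpa only [mul_div_mul_left _ _ (two_ne_zero' ℝ)] using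
    Complex.dist_le_div_mul_dist_of_mapsTo_ball (hd.mono hsub) hmaps hwz

theorem exists_forall_lipschitzOnWith_of_hasFDerivAt_zero (c : E) (B : ℝ) (hR : 0 < R)
    {K : ℝ≥0} (hK : 0 < K) : ∃ ρ > 0, ∀ f : E → F, DifferentiableOn ℂ f (ball c R) →
      MapsTo f (ball c R) (closedBall (f c) B) → HasFDerivAt f (0 : E →L[ℂ] F) c →
      LipschitzOnWith K f (ball c ρ) := by
  have small : ∀ᶠ ρ : ℝ in 𝓝[>] 0, 3 * ρ < R ∧ 9 * B * ρ / R ^ 2 < K := by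
    refine Eventually.filter_mono nhdsWithin_le_nhds (Eventually.and ?_ ?_) <;>
      refine ContinuousAt.eventually_lt (by fun_prop) continuousAt_const ?_ <;> simpa
  obtain ⟨ρ, ⟨hρR, hρK⟩, hρ : 0 < ρ⟩ := (small.and self_mem_nhdsWithin).exists
  refine ⟨ρ, hρ, fun f hd hf hf' ↦ LipschitzOnWith.of_dist_le_mul fun w hw z hz ↦ ?_⟩
  have hsub : ball c (3 * ρ) ⊆ ball c R := ball_subset_ball hρR.le
  have hB : 0 ≤ B := dist_nonneg.trans (hf (mem_ball_self hR))
  have hmaps : MapsTo f (ball c (3 * ρ)) (closedBall (f c) (B * (3 * ρ / R) ^ 2)) := fun x hx ↦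
    (dist_le_mul_div_sq_of_hasFDerivAt_zero hd hf hf' (hsub hx)).trans
      (by gcongr; exact (mem_ball.1 hx).le)
  calc dist (f w) (f z) ≤ B * (3 * ρ / R) ^ 2 / ρ * dist w z :=
        dist_le_div_mul_dist_of_mapsTo_ball_three_mul (hd.mono hsub) hmaps hw hz
    _ = 9 * B * ρ / R ^ 2 * dist w z := by field_simp; ring
    _ ≤ K * dist w z := by gcongr

theorem eqOn_ball_const_of_eventuallyEq (hd : DifferentiableOn ℂ f (ball c R))
    (hf : IsBounded (f '' ball c R)) (hfb : f =ᶠ[𝓝 c] fun _ ↦ b) :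
    EqOn f (fun _ ↦ b) (ball c R) := fun z hz ↦ by
  obtain rfl : f c = b := hfb.eq_of_nhds
  obtain ⟨B, hB⟩ := hf.subset_closedBall (f c)
  have flat (n : ℕ) : (f · - f c) =o[𝓝 c] fun w ↦ ‖w - c‖ ^ n :=
    (isLittleO_zero _ _).congr' (hfb.mono fun _ hw ↦ (sub_eq_zero.2 hw).symm) .rfl
  have decay (n : ℕ) : dist (f z) (f c) ≤ B * (dist z c / R) ^ (n + 1) :=
    Complex.dist_le_mul_div_pow_of_mapsTo_ball_of_isLittleO hd
      (mapsTo_iff_image_subset.2 hB) (flat n) hz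
  have hlim : Tendsto (fun n : ℕ ↦ B * (dist z c / R) ^ (n + 1)) atTop (𝓝 (B * 0)) := by
    have hR : 0 < R := dist_nonneg.trans_lt hz
    exact (((tendsto_pow_atTop_nhds_zero_of_lt_one (by positivity)
      ((div_lt_one hR).2 hz)).comp (tendsto_add_atTop_nat 1)).const_mul B)
  exact dist_le_zero.1 (mul_zero B ▸ ge_of_tendsto' hlim decay)

theorem eqOn_of_isPreconnected_of_eventuallyEq (hf : DifferentiableOn ℂ f U)
    (hg : DifferentiableOn ℂ g U) (hUo : IsOpen U) (hUc : IsPreconnected U) (ha : a ∈ U)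
    (hfg : f =ᶠ[𝓝 a] g) : EqOn f g U := by
  suffices hsub : U ⊆ {z | f =ᶠ[𝓝 z] g} from fun z hz ↦ (hsub hz).eq_of_nhds
  refine hUc.subset_of_closure_inter_subset isOpen_setOfPred_eventually_nhds ⟨a, ha, hfg⟩ ?_
  rintro z ⟨hz, hzU⟩
  have hd : DifferentiableOn ℂ (f - g) U := hf.sub hg
  have hB : ∀ᶠ x in 𝓝 z, ‖(f - g) x‖ < ‖(f - g) z‖ + 1 :=
    (hd.continuousOn.continuousAt (hUo.mem_nhds hzU)).norm.eventually_lt_const (lt_add_one _)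
  obtain ⟨r, hr, hrU⟩ := Metric.eventually_nhds_iff_ball.1 (hB.and (hUo.mem_nhds hzU))
  obtain ⟨w, hw, hzw⟩ := Metric.mem_closure_iff.1 hz (r / 2) (half_pos hr)
  have hball : ball w (r / 2) ⊆ ball z r :=
    ball_subset_ball' (by rw [dist_comm]; linarith)
  have hzero : EqOn (f - g) (fun _ ↦ 0) (ball w (r / 2)) :=
    eqOn_ball_const_of_eventuallyEq (hd.mono fun x hx ↦ (hrU x (hball hx)).2)
      (isBounded_iff_forall_norm_le.2
        ⟨_, forall_mem_image.2 fun x hx ↦ (hrU x (hball hx)).1.le⟩)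
      (hw.mono fun _ hx ↦ sub_eq_zero.2 hx)
  filter_upwards [isOpen_ball.mem_nhds hzw] with x hx using sub_eq_zero.1 (hzero hx)

end Holomorphic

section CartanUniqueness

variable {E : Type*} [NormedAddCommGroup E] [NormedSpace ℂ E] {f : E → E} {U : Set E} {a : E}

theorem exists_forall_lipschitzOnWith_iterate_sub_id (hUo : IsOpen U) (hUb : IsBounded U)
    (hd : DifferentiableOn ℂ f U) (hf : MapsTo f U U) (ha : a ∈ U) (hfa : IsFixedPt f a)
    (hf' : HasFDerivAt f (.id ℂ E) a) {K : ℝ≥0} (hK : 0 < K) :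
    ∃ ρ > 0, ∀ n, LipschitzOnWith K (fun x ↦ f^[n] x - x) (ball a ρ) := by
  obtain ⟨R, hR, hRU⟩ := isOpen_iff.1 hUo a ha
  obtain ⟨ρ, hρ, hlip⟩ :=
    exists_forall_lipschitzOnWith_of_hasFDerivAt_zero (F := E) a (diam U) hR hK
  refine ⟨ρ, hρ, fun n ↦ hlip _ (((hd.iterate hf n).sub differentiableOn_id).mono hRU) ?_ ?_⟩
  · intro x hx
    have hxU := hRU hx
    rw [(hfa.iterate n).eq, sub_self, mem_closedBall_zero_iff, ← dist_eq_norm]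
    exact dist_le_diam_of_mem hUb (hf.iterate n hxU) hxU
  · have iterate_tangent : HasFDerivAt f^[n] (.id ℂ E) a :=
      (hf'.iterate hfa n).congr_fderiv (one_pow n)
    simpa only [sub_self, id_eq] using iterate_tangent.fun_sub (hasFDerivAt_id a)

theorem eventuallyEq_id_of_hasFDerivAt_id (hUo : IsOpen U) (hUb : IsBounded U)
    (hd : DifferentiableOn ℂ f U) (hf : MapsTo f U U) (ha : a ∈ U) (hfa : IsFixedPt f a)
    (hf' : HasFDerivAt f (.id ℂ E) a) : f =ᶠ[𝓝 a] id := by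
  obtain ⟨ρ, hρ, hlip⟩ := exists_forall_lipschitzOnWith_iterate_sub_id hUo hUb hd hf ha hfa hf'
    (show (0 : ℝ≥0) < 1 / 2 by norm_num)
  filter_upwards [ball_mem_nhds a (half_pos hρ)] with z hz
  have hzρ : z ∈ ball a ρ := ball_subset_ball (by linarith) hz
  have orbit (n : ℕ) : f^[n] z ∈ ball a ρ := by
    have hdisp : ‖f^[n] z - z‖ ≤ 1 / 2 * ‖z - a‖ := by
      simpa [(hfa.iterate n).eq] using (hlip n).norm_sub_le hzρ (mem_ball_self hρ)
    rw [mem_ball_iff_norm] at hz ⊢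
    linarith [norm_sub_le_norm_sub_add_norm_sub (f^[n] z) z a, norm_nonneg (z - a)]
  exact isFixedPt_of_lipschitzOnWith_iterate_sub_id (by norm_num) hlip orbit
    (isBounded_ball.subset (range_subset_iff.2 orbit))

theorem eqOn_id_of_hasFDerivAt_id (hUo : IsOpen U) (hUc : IsPreconnected U) (hUb : IsBounded U)
    (hd : DifferentiableOn ℂ f U) (hf : MapsTo f U U) (ha : a ∈ U) (hfa : IsFixedPt f a)
    (hf' : HasFDerivAt f (.id ℂ E) a) : EqOn f id U :=
  eqOn_of_isPreconnected_of_eventuallyEq hd differentiableOn_id hUo hUc ha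
    (eventuallyEq_id_of_hasFDerivAt_id hUo hUb hd hf ha hfa hf')

end CartanUniqueness

section Inverse

variable {𝕜 E F : Type*} [NontriviallyNormedField 𝕜] [NormedAddCommGroup E] [NormedSpace 𝕜 E]
  [NormedAddCommGroup F] [NormedSpace 𝕜 F]

theorem fderiv_comp_fderiv_eq_id {f : E → F} {g : F → E} {a : E}
    (hg : DifferentiableAt 𝕜 g (f a)) (hf : DifferentiableAt 𝕜 f a) (hgf : g ∘ f =ᶠ[𝓝 a] id) :
    (fderiv 𝕜 g (f a)).comp (fderiv 𝕜 f a) = .id 𝕜 E := by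
  rw [← fderiv_comp a hg hf, hgf.fderiv_eq, fderiv_id]

theorem exists_linearIsometryEquiv_of_norm_le_one {T : E →L[𝕜] F} {S : F →L[𝕜] E}
    (hT : ‖T‖ ≤ 1) (hS : ‖S‖ ≤ 1) (hST : S.comp T = .id 𝕜 E) (hTS : T.comp S = .id 𝕜 F) :
    ∃ e : E ≃ₗᵢ[𝕜] F, (e : E →L[𝕜] F) = T := by
  have left (x : E) : S (T x) = x := DFunLike.congr_fun hST x
  have right (y : F) : T (S y) = y := DFunLike.congr_fun hTS y
  have norm_map (x : E) : ‖T x‖ = ‖x‖ := by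
    refine le_antisymm (by simpa using T.le_of_opNorm_le hT x) ?_
    simpa [left] using S.le_of_opNorm_le hS (T x)
  exact ⟨.ofSurjective ⟨T, norm_map⟩ fun y ↦ ⟨S y, right y⟩, rfl⟩

end Inverse

section Ball

variable {V V' : Type*} [NormedAddCommGroup V] [NormedSpace ℂ V] [NormedAddCommGroup V']
  [NormedSpace ℂ V'] {h : V → V'} {g : V' → V} {r : ℝ}

theorem exists_linearIsometryEquiv_eq_fderiv (hr : 0 < r)
    (hh : DifferentiableOn ℂ h (ball 0 r)) (hg : DifferentiableOn ℂ g (ball 0 r))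
    (hmaps : MapsTo h (ball 0 r) (ball 0 r)) (gmaps : MapsTo g (ball 0 r) (ball 0 r))
    (hgh : InvOn g h (ball 0 r) (ball 0 r)) (h0 : h 0 = 0) :
    ∃ e : V ≃ₗᵢ[ℂ] V', (e : V →L[ℂ] V') = fderiv ℂ h 0 := by
  have nhds_V : ball (0 : V) r ∈ 𝓝 0 := ball_mem_nhds 0 hr
  have nhds_V' : ball (0 : V') r ∈ 𝓝 0 := ball_mem_nhds 0 hr
  have g0 : g 0 = 0 := h0 ▸ hgh.1 (mem_ball_self hr)
  have dh : DifferentiableAt ℂ h 0 := hh.differentiableAt nhds_V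
  have dg : DifferentiableAt ℂ g 0 := hg.differentiableAt nhds_V'
  have left_inv : (fderiv ℂ g 0).comp (fderiv ℂ h 0) = .id ℂ V := by
    simpa only [h0] using fderiv_comp_fderiv_eq_id (h0.symm ▸ dg) dh
      (hgh.1.eqOn.eventuallyEq_of_mem nhds_V)
  have right_inv : (fderiv ℂ h 0).comp (fderiv ℂ g 0) = .id ℂ V' := by
    simpa only [g0] using fderiv_comp_fderiv_eq_id (g0.symm ▸ dh) dg
      (hgh.2.eqOn.eventuallyEq_of_mem nhds_V')
  exact exists_linearIsometryEquiv_of_norm_le_one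
    (Complex.norm_fderiv_le_one_of_mapsTo_ball hh
      (h0.symm ▸ hmaps.mono_right ball_subset_closedBall) hr)
    (Complex.norm_fderiv_le_one_of_mapsTo_ball hg
      (g0.symm ▸ gmaps.mono_right ball_subset_closedBall) hr) left_inv right_inv

theorem eqOn_ball_of_hasFDerivAt_linearIsometryEquiv
    (hh : DifferentiableOn ℂ h (ball 0 r)) (hmaps : MapsTo h (ball 0 r) (ball 0 r))
    (h0 : h 0 = 0) {e : V ≃ₗᵢ[ℂ] V'} (he : HasFDerivAt h (e : V →L[ℂ] V') 0) :
    EqOn h e (ball 0 r) := fun z hz ↦ by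
  have hr : 0 < r := pos_of_mem_ball hz
  have cartan : EqOn (e.symm ∘ h) id (ball 0 r) := by
    refine eqOn_id_of_hasFDerivAt_id isOpen_ball (convex_ball 0 r).isPreconnected isBounded_ball
      (e.symm.differentiable.comp_differentiableOn hh) (fun w hw ↦ ?_) (mem_ball_self hr)
      (by simp [IsFixedPt, h0]) ?_
    · simpa using hmaps hw
    · refine (e.symm.hasFDerivAt.comp 0 he).congr_fderiv ?_
      ext x
      simp
  exact e.symm_apply_eq.1 (cartan hz)

theorem stmt_13_general (hhol : DifferentiableOn ℂ h (ball 0 1))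
    (himg : h '' ball 0 1 = ball 0 1) (hghol : DifferentiableOn ℂ g (ball 0 1))
    (hgh : LeftInvOn g h (ball 0 1)) (h0 : h 0 = 0) :
    ∃ T : V ≃ₗᵢ[ℂ] V', (T : V →L[ℂ] V') = fderiv ℂ h 0 ∧ EqOn h T (ball 0 1) := by
  have hmaps : MapsTo h (ball 0 1) (ball 0 1) := himg ▸ mapsTo_image h _
  have gmaps : MapsTo g (ball 0 1) (ball 0 1) := hgh.mapsTo himg.ge
  have hhg : RightInvOn g h (ball 0 1) := himg ▸ hgh.rightInvOn_image
  obtain ⟨T, hT⟩ :=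
    exists_linearIsometryEquiv_eq_fderiv one_pos hhol hghol hmaps gmaps ⟨hgh, hhg⟩ h0
  have dh : DifferentiableAt ℂ h 0 := hhol.differentiableAt (ball_mem_nhds 0 one_pos)
  exact ⟨T, hT, eqOn_ball_of_hasFDerivAt_linearIsometryEquiv hhol hmaps h0
    (hT ▸ dh.hasFDerivAt)⟩

end Ball

/-- A biholomorphic map `h` between the open unit balls of complex Banach
spaces `V, V'` with `h(0) = 0` is the restriction of its derivative `h'(0)`, which is a
surjective linear isometry; hence `h` extends continuously to the closed balls and maps the
unit sphere of `V` onto that of `V'`. -/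
theorem stmt_13
    {V : Type*} [NormedAddCommGroup V] [NormedSpace ℂ V] [CompleteSpace V]
    {V' : Type*} [NormedAddCommGroup V'] [NormedSpace ℂ V'] [CompleteSpace V']
    (h : V → V') (g : V' → V)
    (hhol : DifferentiableOn ℂ h (ball (0 : V) 1))
    (himg : h '' ball (0 : V) 1 = ball (0 : V') 1)
    (hinj : Set.InjOn h (ball (0 : V) 1))
    (hghol : DifferentiableOn ℂ g (ball (0 : V') 1))
    (hgh : ∀ z ∈ ball (0 : V) 1, g (h z) = z)
    (h0 : h 0 = 0) :
    ∃ T : V →L[ℂ] V',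
      (T : V → V') = fderiv ℂ h 0 ∧
      (∀ z ∈ ball (0 : V) 1, h z = T z) ∧
      Isometry T ∧ Function.Surjective T ∧
      (T : V → V') '' sphere (0 : V) 1 = sphere (0 : V') 1 := by
  obtain ⟨T, hT, hhT⟩ := stmt_13_general hhol himg hghol hgh h0
  exact ⟨T, congrArg _ hT, hhT, T.isometry, T.surjective, by simp⟩
end
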